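/- Let (X,μ) be a measure space, 1 < p,p₁,p₂ < ∞ and 1 ≤ r,r₁,r₂ ≤ ∞ with 1/p = 1/p₁ + 1/p₂ and 1/r = 1/r₁ + 1/r₂. Then for all measurable f,g, ‖fg‖_{L_{p,r}} ≤ C ‖f‖_{L_{p₁,r₁}} ‖g‖_{L_{p₂,r₂}} (Hölder inequality in Lorentz spaces). -/

import Mathlib

open MeasureTheory Set ENNReal

/-- The Lorentz quasinorm `‖f‖_{L_{p,r}}` on a measure space, defined via the
distribution function: `p^{1/r} (∫₀^∞ (s μ{|f|>s}^{1/p})^r ds/s)^{1/r}` for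
`r < ∞`, and `sup_{s>0} s μ{|f|>s}^{1/p}` for `r = ∞`. -/
noncomputable def lorentzNorm {X : Type*} [MeasurableSpace X] (μ : Measure X)
    (p : ℝ) (r : ℝ≥0∞) (f : X → ℝ) : ℝ≥0∞ :=
  if r = ∞ then ⨆ s ∈ Set.Ioi (0:ℝ), ENNReal.ofReal s * μ {x | s < |f x|} ^ (1 / p)
  else ENNReal.ofReal p ^ (1 / r.toReal) *
    (∫⁻ s in Set.Ioi (0:ℝ),
        (ENNReal.ofReal s * μ {x | s < |f x|} ^ (1 / p)) ^ r.toReal / ENNReal.ofReal s) ^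
      (1 / r.toReal)

/-- The decreasing rearrangement of `f`, as a function with values in `[0, ∞]`. -/
noncomputable def decRearr {X : Type*} [MeasurableSpace X] (μ : Measure X) (f : X → ℝ)
    (t : ℝ≥0∞) : ℝ≥0∞ :=
  ⨆ (s : ℝ) (_ : 0 ≤ s ∧ t < μ {x | s < |f x|}), ENNReal.ofReal s

/-- The multiplicatively invariant measure `dt / t` on `(0, ∞)`. -/
noncomputable def haarIoi : Measure ℝ :=
  (volume.restrict (Ioi (0 : ℝ))).withDensity fun t => (ENNReal.ofReal t)⁻¹

section Rearrangement

variable {X : Type*} [MeasurableSpace X] {μ : Measure X} {f g : X → ℝ}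

lemma antitone_distribution (μ : Measure X) (f : X → ℝ) :
    Antitone fun s : ℝ => μ {x | s < |f x|} :=
  fun _ _ h => measure_mono fun _ hx => lt_of_le_of_lt h hx

lemma antitone_decRearr (μ : Measure X) (f : X → ℝ) : Antitone (decRearr μ f) :=
  fun _ _ h => iSup_mono fun _ => iSup_mono' fun hs => ⟨⟨hs.1, h.trans_lt hs.2⟩, le_rfl⟩

lemma exists_gt_lt_distribution {s : ℝ} {t : ℝ≥0∞} (h : t < μ {x | s < |f x|}) :
    ∃ s' > s, t < μ {x | s' < |f x|} := by
  have hU : {x | s < |f x|} = ⋃ n : ℕ, {x | s + 1 / ((n : ℝ) + 1) < |f x|} := by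
    ext x
    simp only [mem_ofPred_eq, mem_iUnion]
    refine ⟨fun hx => ?_, fun ⟨n, hn⟩ => lt_trans (lt_add_of_pos_right _ (by positivity)) hn⟩
    obtain ⟨n, hn⟩ := exists_nat_one_div_lt (sub_pos.2 hx)
    exact ⟨n, by linarith⟩
  have hmono : Monotone fun n : ℕ => {x | s + 1 / ((n : ℝ) + 1) < |f x|} := by
    intro m n hmn x hx
    have : 1 / ((n : ℝ) + 1) ≤ 1 / ((m : ℝ) + 1) := Nat.one_div_le_one_div hmn
    exact lt_of_le_of_lt (by linarith) (show s + 1 / ((m : ℝ) + 1) < |f x| from hx)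
  rw [hU, hmono.measure_iUnion, lt_iSup_iff] at h
  obtain ⟨n, hn⟩ := h
  exact ⟨_, lt_add_of_pos_right _ (by positivity), hn⟩

lemma ofReal_lt_decRearr_iff {s : ℝ} (hs : 0 ≤ s) {t : ℝ≥0∞} :
    ENNReal.ofReal s < decRearr μ f t ↔ t < μ {x | s < |f x|} := by
  constructor
  · intro h
    simp only [decRearr, lt_iSup_iff] at h
    obtain ⟨s', hs', hlt⟩ := h
    exact hs'.2.trans_le
      (antitone_distribution μ f ((ENNReal.ofReal_lt_ofReal_iff_of_nonneg hs).1 hlt).le)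
  · intro h
    obtain ⟨s', hss', hs'⟩ := exists_gt_lt_distribution h
    have h1 : ENNReal.ofReal s' ≤ decRearr μ f t :=
      le_iSup₂_of_le s' ⟨hs.trans hss'.le, hs'⟩ le_rfl
    exact lt_of_lt_of_le ((ENNReal.ofReal_lt_ofReal_iff_of_nonneg hs).2 hss') h1

lemma measure_toReal_decRearr_lt_le {t : ℝ≥0∞} (h : decRearr μ f t ≠ ∞) :
    μ {x | (decRearr μ f t).toReal < |f x|} ≤ t := by
  by_contra! hlt
  rw [← ofReal_lt_decRearr_iff ENNReal.toReal_nonneg, ENNReal.ofReal_toReal h] at hlt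
  exact lt_irrefl _ hlt

lemma measure_lt_abs_mul_le {s : ℝ} (hs : 0 ≤ s) {t : ℝ≥0∞}
    (h : decRearr μ f t * decRearr μ g t < ENNReal.ofReal s) :
    μ {x | s < |(f * g) x|} ≤ 2 * t := by
  have htt : t ≤ 2 * t := by rw [two_mul]; exact le_self_add
  have hne : decRearr μ f t * decRearr μ g t ≠ ∞ := h.ne_top
  by_cases hf : decRearr μ f t = ∞
  · have hg : decRearr μ g t = 0 := by
      by_contra hg
      exact hne (by rw [hf, ENNReal.top_mul hg])
    refine (measure_mono fun x hx => ?_).trans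
      ((measure_toReal_decRearr_lt_le (f := g) (t := t) (by simp [hg])).trans htt)
    simp only [mem_ofPred_eq, hg, ENNReal.toReal_zero, abs_pos, Pi.mul_apply] at hx ⊢
    intro h0
    simp [h0] at hx
    linarith
  by_cases hg : decRearr μ g t = ∞
  · have hf : decRearr μ f t = 0 := by
      by_contra hf
      exact hne (by rw [hg, ENNReal.mul_top hf])
    refine (measure_mono fun x hx => ?_).trans
      ((measure_toReal_decRearr_lt_le (f := f) (t := t) (by simp [hf])).trans htt)
    simp only [mem_ofPred_eq, hf, ENNReal.toReal_zero, abs_pos, Pi.mul_apply] at hx ⊢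
    intro h0
    simp [h0] at hx
    linarith
  have hs' : (decRearr μ f t).toReal * (decRearr μ g t).toReal < s := by
    rw [← ENNReal.toReal_mul]
    exact (ENNReal.lt_ofReal_iff_toReal_lt hne).1 h
  calc μ {x | s < |(f * g) x|}
      ≤ μ ({x | (decRearr μ f t).toReal < |f x|} ∪ {x | (decRearr μ g t).toReal < |g x|}) := by
        refine measure_mono fun x hx => ?_
        simp only [mem_ofPred_eq, mem_union, Pi.mul_apply, abs_mul] at hx ⊢
        by_contra! hc
        have := mul_le_mul hc.1 hc.2 (abs_nonneg _) ENNReal.toReal_nonneg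
        linarith
    _ ≤ t + t := (measure_union_le _ _).trans
        (add_le_add (measure_toReal_decRearr_lt_le hf) (measure_toReal_decRearr_lt_le hg))
    _ = 2 * t := (two_mul t).symm

lemma decRearr_mul_le (t : ℝ≥0∞) :
    decRearr ((2⁻¹ : ℝ≥0∞) • μ) (f * g) t ≤ decRearr μ f t * decRearr μ g t := by
  refine iSup₂_le fun s hs => ?_
  by_contra! hlt
  refine hs.2.not_ge ?_
  rw [Measure.smul_apply, smul_eq_mul]
  calc 2⁻¹ * μ {x | s < |(f * g) x|} ≤ 2⁻¹ * (2 * t) := by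
        gcongr
        exact measure_lt_abs_mul_le hs.1 hlt
    _ = t := by rw [← mul_assoc, ENNReal.inv_mul_cancel (by simp) (by simp), one_mul]

end Rearrangement

lemma lintegral_haarIoi (φ : ℝ → ℝ≥0∞) :
    ∫⁻ t, φ t ∂haarIoi = ∫⁻ t in Ioi (0 : ℝ), φ t / ENNReal.ofReal t := by
  have hd : Measurable fun t : ℝ => (ENNReal.ofReal t)⁻¹ := by fun_prop
  rw [haarIoi, lintegral_withDensity_eq_lintegral_mul_non_measurable _ hd]
  · simp only [Pi.mul_apply, div_eq_mul_inv, mul_comm]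
  · filter_upwards [ae_restrict_mem measurableSet_Ioi] with t ht
    simpa using ht

lemma rpow_eq_lintegral {ρ : ℝ} (hρ : 0 < ρ) (y : ℝ≥0∞) :
    y ^ ρ = ∫⁻ s in Ioi (0 : ℝ),
      {s : ℝ | ENNReal.ofReal s < y}.indicator (fun s => ENNReal.ofReal (ρ * s ^ (ρ - 1))) s := by
  have key : ∀ a : ℝ, 0 ≤ a →
      ∫⁻ s in Ioo (0 : ℝ) a, ENNReal.ofReal (ρ * s ^ (ρ - 1)) = ENNReal.ofReal (a ^ ρ) := by
    intro a ha
    have hint : IntervalIntegrable (fun s : ℝ => ρ * s ^ (ρ - 1)) volume 0 a :=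
      (intervalIntegral.intervalIntegrable_rpow' (by linarith)).const_mul _
    rw [restrict_Ioo_eq_restrict_Ioc, ← ofReal_integral_eq_lintegral_ofReal,
      ← intervalIntegral.integral_of_le ha, intervalIntegral.integral_const_mul,
      integral_rpow (Or.inl (by linarith))]
    · congr 1
      rw [sub_add_cancel, Real.zero_rpow hρ.ne']
      field_simp
      ring
    · exact (intervalIntegrable_iff_integrableOn_Ioc_of_le ha).1 hint
    · filter_upwards [ae_restrict_mem measurableSet_Ioc] with s hs
      exact mul_nonneg hρ.le (Real.rpow_nonneg hs.1.le _)
  have hms : MeasurableSet {s : ℝ | ENNReal.ofReal s < y} :=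
    measurableSet_lt ENNReal.measurable_ofReal measurable_const
  rw [lintegral_indicator hms, Measure.restrict_restrict hms]
  rcases eq_or_ne y ∞ with rfl | hy
  · rw [ENNReal.top_rpow_of_pos hρ]
    symm
    refine ENNReal.eq_top_of_forall_nnreal_le fun c => ?_
    have hc : (c : ℝ≥0∞) = ENNReal.ofReal (((c : ℝ) ^ (1 / ρ)) ^ ρ) := by
      rw [← Real.rpow_mul c.coe_nonneg, one_div_mul_cancel hρ.ne', Real.rpow_one,
        ENNReal.ofReal_coe_nnreal]
    rw [hc, ← key _ (Real.rpow_nonneg c.coe_nonneg _)]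
    refine lintegral_mono_set fun s hs => ?_
    simpa using hs.1
  · have hset : {s : ℝ | ENNReal.ofReal s < y} ∩ Ioi 0 = Ioo 0 y.toReal := by
      ext s
      simp only [mem_inter_iff, mem_ofPred_eq, mem_Ioi, mem_Ioo]
      constructor
      · rintro ⟨h1, h2⟩
        exact ⟨h2, (ENNReal.ofReal_lt_iff_lt_toReal h2.le hy).1 h1⟩
      · rintro ⟨h1, h2⟩
        exact ⟨(ENNReal.ofReal_lt_iff_lt_toReal h1.le hy).2 h2, h1⟩
    rw [hset, key _ ENNReal.toReal_nonneg,
      ← ENNReal.ofReal_rpow_of_nonneg ENNReal.toReal_nonneg hρ.le, ENNReal.ofReal_toReal hy]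

lemma ofReal_mul_rpow_div_self {ρ s : ℝ} (hρ : 0 < ρ) (hs : 0 < s) (y : ℝ≥0∞) :
    (ENNReal.ofReal s * y) ^ ρ / ENNReal.ofReal s = ENNReal.ofReal (s ^ (ρ - 1)) * y ^ ρ := by
  rw [ENNReal.mul_rpow_of_nonneg _ _ hρ.le, Real.rpow_sub_one hs.ne',
    ENNReal.ofReal_div_of_pos hs, ← ENNReal.ofReal_rpow_of_pos hs]
  simp only [div_eq_mul_inv]
  ring

section Norm

variable {X : Type*} [MeasurableSpace X] {μ : Measure X} {f g : X → ℝ} {p : ℝ} {r : ℝ≥0∞}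

lemma lintegral_decRearr (hp : 0 < p) {ρ : ℝ} (hρ : 0 < ρ) :
    ∫⁻ t, (ENNReal.ofReal t ^ (1 / p) * decRearr μ f (ENNReal.ofReal t)) ^ ρ ∂haarIoi =
      ENNReal.ofReal p * ∫⁻ s in Ioi (0 : ℝ),
        (ENNReal.ofReal s * μ {x | s < |f x|} ^ (1 / p)) ^ ρ / ENNReal.ofReal s := by
  have hρp : 0 < ρ / p := div_pos hρ hp
  have ha : Measurable fun s : ℝ => μ {x | s < |f x|} := (antitone_distribution μ f).measurable
  set K : ℝ → ℝ → ℝ≥0∞ := fun t s =>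
    {z : ℝ × ℝ | ENNReal.ofReal z.1 < μ {x | z.2 < |f x|}}.indicator
      (fun z => ENNReal.ofReal (z.1 ^ (ρ / p - 1)) * ENNReal.ofReal (ρ * z.2 ^ (ρ - 1))) (t, s)
    with hK
  have hKm : Measurable (Function.uncurry K) := by
    refine Measurable.indicator (by fun_prop) (measurableSet_lt (by fun_prop) ?_)
    exact ha.comp measurable_snd
  have hleft : ∫⁻ t, (ENNReal.ofReal t ^ (1 / p) * decRearr μ f (ENNReal.ofReal t)) ^ ρ ∂haarIoi =
      ∫⁻ t in Ioi (0 : ℝ), ∫⁻ s in Ioi (0 : ℝ), K t s := by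
    rw [lintegral_haarIoi]
    refine setLIntegral_congr_fun measurableSet_Ioi fun t (ht : 0 < t) => ?_
    have h1 : (ENNReal.ofReal t ^ (1 / p) * decRearr μ f (ENNReal.ofReal t)) ^ ρ
        / ENNReal.ofReal t =
        ENNReal.ofReal (t ^ (ρ / p - 1)) * decRearr μ f (ENNReal.ofReal t) ^ ρ := by
      rw [ENNReal.mul_rpow_of_nonneg _ _ hρ.le, ← ENNReal.rpow_mul, one_div_mul_eq_div,
        Real.rpow_sub_one ht.ne', ENNReal.ofReal_div_of_pos ht, ← ENNReal.ofReal_rpow_of_pos ht]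
      simp only [div_eq_mul_inv]
      ring
    rw [h1, rpow_eq_lintegral hρ, ← lintegral_const_mul' _ _ ENNReal.ofReal_ne_top]
    refine setLIntegral_congr_fun measurableSet_Ioi fun s (hs : 0 < s) => ?_
    simp only [hK, indicator, mem_ofPred_eq, ofReal_lt_decRearr_iff hs.le]
    split_ifs <;> simp
  have hright : ∀ s ∈ Ioi (0 : ℝ), ∫⁻ t in Ioi (0 : ℝ), K t s = ENNReal.ofReal p *
      ((ENNReal.ofReal s * μ {x | s < |f x|} ^ (1 / p)) ^ ρ / ENNReal.ofReal s) := by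
    intro s (hs : 0 < s)
    rw [ofReal_mul_rpow_div_self hρ hs, ← ENNReal.rpow_mul, one_div_mul_eq_div,
      rpow_eq_lintegral hρp, ← mul_assoc, ← ENNReal.ofReal_mul hp.le,
      ← lintegral_const_mul' _ _ ENNReal.ofReal_ne_top]
    refine setLIntegral_congr_fun measurableSet_Ioi fun t (ht : 0 < t) => ?_
    simp only [hK, indicator, mem_ofPred_eq]
    split_ifs
    · rw [← ENNReal.ofReal_mul (by positivity), ← ENNReal.ofReal_mul (by positivity)]
      congr 1
      field_simp
    · simp
  rw [hleft, lintegral_lintegral_swap hKm.aemeasurable,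
    setLIntegral_congr_fun measurableSet_Ioi hright,
    lintegral_const_mul' _ _ ENNReal.ofReal_ne_top]

lemma lorentzNorm_eq_lintegral_decRearr (hp : 0 < p) (hr0 : r ≠ 0) (hr : r ≠ ∞) :
    lorentzNorm μ p r f = (∫⁻ t, (ENNReal.ofReal t ^ (1 / p) *
      decRearr μ f (ENNReal.ofReal t)) ^ r.toReal ∂haarIoi) ^ (1 / r.toReal) := by
  rw [lintegral_decRearr hp (ENNReal.toReal_pos hr0 hr),
    ENNReal.mul_rpow_of_nonneg _ _ (by positivity), lorentzNorm, if_neg hr]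

lemma rpow_mul_decRearr_le_lorentzNorm_top (hp : 0 < p) (t : ℝ≥0∞) :
    t ^ (1 / p) * decRearr μ f t ≤ lorentzNorm μ p ∞ f := by
  rw [lorentzNorm, if_pos rfl, decRearr]
  simp only [ENNReal.mul_iSup]
  refine iSup₂_le fun s hs => ?_
  rcases hs.1.eq_or_lt with rfl | hs0
  · simp
  refine le_iSup₂_of_le s hs0 ?_
  rw [mul_comm]
  gcongr
  exact hs.2.le

lemma lorentzNorm_top_le (hp : 0 < p) {M : ℝ≥0∞}
    (h : ∀ t : ℝ≥0∞, t ^ (1 / p) * decRearr μ f t ≤ M) : lorentzNorm μ p ∞ f ≤ M := by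
  rw [lorentzNorm, if_pos rfl]
  refine iSup₂_le fun s (hs : 0 < s) => ?_
  have hs0 : ENNReal.ofReal s ≠ 0 := by simpa using hs
  rw [mul_comm, ← ENNReal.le_div_iff_mul_le (Or.inl hs0) (Or.inl ENNReal.ofReal_ne_top),
    one_div, ENNReal.rpow_inv_le_iff hp]
  refine le_of_forall_lt_imp_le_of_dense fun t ht => ?_
  rw [← ENNReal.rpow_inv_le_iff hp, ← one_div,
    ENNReal.le_div_iff_mul_le (Or.inl hs0) (Or.inl ENNReal.ofReal_ne_top)]
  exact le_trans (by gcongr; exact ((ofReal_lt_decRearr_iff hs.le).2 ht).le) (h t)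

lemma lorentzNorm_smul_measure (hp : 0 < p) (hr0 : r ≠ 0) {c : ℝ≥0∞} (hc : c ≠ ∞) :
    lorentzNorm (c • μ) p r f = c ^ (1 / p) * lorentzNorm μ p r f := by
  have hc' : c ^ (1 / p) ≠ ∞ := ENNReal.rpow_ne_top_of_nonneg (by positivity) hc
  simp only [lorentzNorm, Measure.smul_apply, smul_eq_mul]
  have hmul : ∀ s : ℝ, ENNReal.ofReal s * (c * μ {x | s < |f x|}) ^ (1 / p) =
      c ^ (1 / p) * (ENNReal.ofReal s * μ {x | s < |f x|} ^ (1 / p)) := fun s => by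
    rw [ENNReal.mul_rpow_of_nonneg _ _ (by positivity), mul_left_comm]
  simp only [hmul]
  split_ifs with hr
  · simp only [ENNReal.mul_iSup]
  · have hρ : 0 < r.toReal := ENNReal.toReal_pos hr0 hr
    simp only [ENNReal.mul_rpow_of_nonneg (c ^ (1 / p)) _ hρ.le, mul_div_assoc]
    rw [lintegral_const_mul' _ _ (ENNReal.rpow_ne_top_of_nonneg hρ.le hc'),
      ENNReal.mul_rpow_of_nonneg _ _ (by positivity), ← ENNReal.rpow_mul (c ^ (1 / p)),
      mul_one_div_cancel hρ.ne', ENNReal.rpow_one, mul_left_comm]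

lemma aemeasurable_rpow_mul_decRearr (μ : Measure X) (f : X → ℝ) (p : ℝ) (ν : Measure ℝ) :
    AEMeasurable (fun t : ℝ => ENNReal.ofReal t ^ (1 / p) * decRearr μ f (ENNReal.ofReal t)) ν :=
  ((ENNReal.measurable_ofReal.pow_const _).mul
    ((antitone_decRearr μ f).measurable.comp ENNReal.measurable_ofReal)).aemeasurable

variable {p₁ p₂ : ℝ} {r₁ r₂ : ℝ≥0∞}

lemma rpow_mul_decRearr_mul_le (hp₁ : 0 < p₁) (hp₂ : 0 < p₂) (hpeq : 1 / p = 1 / p₁ + 1 / p₂)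
    (t : ℝ≥0∞) :
    t ^ (1 / p) * decRearr ((2⁻¹ : ℝ≥0∞) • μ) (f * g) t ≤
      (t ^ (1 / p₁) * decRearr μ f t) * (t ^ (1 / p₂) * decRearr μ g t) := by
  rw [hpeq, ENNReal.rpow_add_of_nonneg _ _ (by positivity) (by positivity), mul_mul_mul_comm]
  gcongr
  exact decRearr_mul_le t

lemma lorentzNorm_half_mul_le_of_ne_top_of_top (hp : 0 < p) (hp₁ : 0 < p₁) (hp₂ : 0 < p₂)
    (hr0 : r ≠ 0) (hr : r ≠ ∞) (hpeq : 1 / p = 1 / p₁ + 1 / p₂) :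
    lorentzNorm ((2⁻¹ : ℝ≥0∞) • μ) p r (f * g) ≤
      lorentzNorm μ p₁ r f * lorentzNorm μ p₂ ∞ g := by
  have hρ : 0 < r.toReal := ENNReal.toReal_pos hr0 hr
  rw [lorentzNorm_eq_lintegral_decRearr hp hr0 hr, lorentzNorm_eq_lintegral_decRearr hp₁ hr0 hr]
  set G := lorentzNorm μ p₂ ∞ g
  calc _ ≤ (∫⁻ t, (ENNReal.ofReal t ^ (1 / p₁) *
          decRearr μ f (ENNReal.ofReal t)) ^ r.toReal * G ^ r.toReal ∂haarIoi) ^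
            (1 / r.toReal) := by
        gcongr with t
        rw [← ENNReal.mul_rpow_of_nonneg _ _ hρ.le]
        refine ENNReal.rpow_le_rpow ((rpow_mul_decRearr_mul_le hp₁ hp₂ hpeq _).trans ?_) hρ.le
        gcongr
        exact rpow_mul_decRearr_le_lorentzNorm_top hp₂ _
    _ = _ := by
        rw [lintegral_mul_const'' _ ((aemeasurable_rpow_mul_decRearr μ f p₁ _).pow_const _),
          ENNReal.mul_rpow_of_nonneg _ _ (by positivity), ← ENNReal.rpow_mul G,
          mul_one_div_cancel hρ.ne', ENNReal.rpow_one]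

lemma lorentzNorm_half_mul_le (hp : 0 < p) (hp₁ : 0 < p₁) (hp₂ : 0 < p₂)
    (hr0 : r ≠ 0) (hr₁ : r₁ ≠ 0) (hr₂ : r₂ ≠ 0)
    (hpeq : 1 / p = 1 / p₁ + 1 / p₂) (hreq : r⁻¹ = r₁⁻¹ + r₂⁻¹) :
    lorentzNorm ((2⁻¹ : ℝ≥0∞) • μ) p r (f * g) ≤
      lorentzNorm μ p₁ r₁ f * lorentzNorm μ p₂ r₂ g := by
  rcases eq_or_ne r₂ ∞ with rfl | h₂
  · obtain rfl : r = r₁ := by simpa using hreq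
    rcases eq_or_ne r ∞ with rfl | hr
    · refine lorentzNorm_top_le hp fun t => (rpow_mul_decRearr_mul_le hp₁ hp₂ hpeq t).trans ?_
      gcongr
      · exact rpow_mul_decRearr_le_lorentzNorm_top hp₁ t
      · exact rpow_mul_decRearr_le_lorentzNorm_top hp₂ t
    · exact lorentzNorm_half_mul_le_of_ne_top_of_top hp hp₁ hp₂ hr0 hr hpeq
  rcases eq_or_ne r₁ ∞ with rfl | h₁
  · obtain rfl : r = r₂ := by simpa using hreq
    rw [mul_comm f g, mul_comm (lorentzNorm μ p₁ ∞ f)]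
    exact lorentzNorm_half_mul_le_of_ne_top_of_top hp hp₂ hp₁ hr0 h₂ (by rw [hpeq, add_comm])
  have hr : r ≠ ∞ := by
    rintro rfl
    rw [ENNReal.inv_top, eq_comm, add_eq_zero] at hreq
    exact h₁ (ENNReal.inv_eq_zero.1 hreq.1)
  have hρ : 0 < r.toReal := ENNReal.toReal_pos hr0 hr
  have hρ₁ : 0 < r₁.toReal := ENNReal.toReal_pos hr₁ h₁
  have hρ₂ : 0 < r₂.toReal := ENNReal.toReal_pos hr₂ h₂
  have hreal : 1 / r.toReal = 1 / r₁.toReal + 1 / r₂.toReal := by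
    simp only [one_div, ← ENNReal.toReal_inv]
    rw [hreq, ENNReal.toReal_add (by simpa) (by simpa)]
  have hlt : r.toReal < r₁.toReal := by
    rw [← one_div_lt_one_div hρ₁ hρ, hreal]
    exact lt_add_of_pos_right _ (by positivity)
  rw [lorentzNorm_eq_lintegral_decRearr hp hr0 hr, lorentzNorm_eq_lintegral_decRearr hp₁ hr₁ h₁,
    lorentzNorm_eq_lintegral_decRearr hp₂ hr₂ h₂]
  refine le_trans ?_ (ENNReal.lintegral_Lp_mul_le_Lq_mul_Lr hρ hlt hreal haarIoi
    (aemeasurable_rpow_mul_decRearr μ f p₁ _) (aemeasurable_rpow_mul_decRearr μ g p₂ _))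
  gcongr with t
  exact rpow_mul_decRearr_mul_le hp₁ hp₂ hpeq _

end Norm

/-- **Hölder's inequality in Lorentz spaces:** if `1/p = 1/p₁ + 1/p₂` and
`1/r = 1/r₁ + 1/r₂`, then `‖fg‖_{L_{p,r}} ≤ C ‖f‖_{L_{p₁,r₁}} ‖g‖_{L_{p₂,r₂}}`. -/
theorem lorentz_holder {X : Type*} [MeasurableSpace X] (μ : Measure X)
    (p p₁ p₂ : ℝ) (r r₁ r₂ : ℝ≥0∞)
    (hp : 1 < p) (hp₁ : 1 < p₁) (hp₂ : 1 < p₂)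
    (hr : 1 ≤ r) (hr₁ : 1 ≤ r₁) (hr₂ : 1 ≤ r₂)
    (hpeq : 1 / p = 1 / p₁ + 1 / p₂) (hreq : r⁻¹ = r₁⁻¹ + r₂⁻¹) :
    ∃ C : ℝ≥0∞, C ≠ ∞ ∧
      ∀ f g : X → ℝ, Measurable f → Measurable g →
        lorentzNorm μ p r (f * g) ≤ C * lorentzNorm μ p₁ r₁ f * lorentzNorm μ p₂ r₂ g := by
  have hp0 : 0 < p := by linarith
  have hr0 : r ≠ 0 := (zero_lt_one.trans_le hr).ne'
  refine ⟨2 ^ (1 / p), ENNReal.rpow_ne_top_of_nonneg (by positivity) (by simp),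
    fun f g _ _ => ?_⟩
  have hμ : μ = (2 : ℝ≥0∞) • ((2⁻¹ : ℝ≥0∞) • μ) := by
    rw [smul_smul, ENNReal.mul_inv_cancel (by simp) (by simp), one_smul]
  calc lorentzNorm μ p r (f * g)
      = 2 ^ (1 / p) * lorentzNorm ((2⁻¹ : ℝ≥0∞) • μ) p r (f * g) := by
        conv_lhs => rw [hμ]
        exact lorentzNorm_smul_measure hp0 hr0 (by simp)
    _ ≤ 2 ^ (1 / p) * (lorentzNorm μ p₁ r₁ f * lorentzNorm μ p₂ r₂ g) := by
        gcongr
        exact lorentzNorm_half_mul_le hp0 (by linarith) (by linarith) hr0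
          (zero_lt_one.trans_le hr₁).ne' (zero_lt_one.trans_le hr₂).ne' hpeq hreq
    _ = 2 ^ (1 / p) * lorentzNorm μ p₁ r₁ f * lorentzNorm μ p₂ r₂ g := (mul_assoc _ _ _).symm
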